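/- Fix m ≥ 1 and δ > 0. For every behavioral randomized online algorithm A there exists a behavioral randomized online algorithm A' such that sup over all instances I of E(I,A') ≤ (sup over dyadic instances J ∈ ⋃_{k∈ℕ} 𝓘_{2^k} of E(J,A)) + δ. That is, an algorithm that performs well on all instances with dyadic item sizes can be extended, by rounding incoming items down to dyadic values, to an algorithm on all instances whose worst-case expected payoff increases by at most δ. -/

import Mathlib

/-!
Fix `ε = δ / m`. Every `a > 0` has a dyadic approximation `r` from below with relative error at
most `ε`, that is `0 < r ≤ a ≤ r + ε * a` (`exists_dyadic_approx`); the relative error is what keeps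
the rounded sizes positive and the accumulated error bounded independently of the number of items.
The algorithm `A'` rounds all items and then follows `A`. On an instance `I` with rounded list `J`,
the runs of `A'` on `I` and of `A` on `J` have the same distribution of decisions. Moreover `J` is
a dyadic instance, since its finitely many sizes have a common denominator `2 ^ k`, and the load of
each bin under `I` exceeds the load under `J` by at most `ε` times the total size of `I`, which is
at most `ε * m = δ` because `I` fits into `m` unit bins. Averaging over decisions gives
`expPayoff m A' I ≤ expPayoff m A J + δ` (`expPayoff_round_le`). The supremum over dyadic instances
is a genuine one because every expected payoff on an instance is at most `m`.
-/

open scoped BigOperators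

namespace BinStretch

def Fits (m : ℕ) (I : List ℝ) : Prop :=
  ∃ σ : Fin I.length → Fin m,
    ∀ b : Fin m, ∑ i ∈ Finset.univ.filter fun i => σ i = b, I.get i ≤ 1

def IsInstance (m : ℕ) (I : List ℝ) : Prop :=
  (∀ a ∈ I, 0 < a ∧ a ≤ 1) ∧ Fits m I

noncomputable def payoff (m : ℕ) (I : List ℝ) (D : Fin I.length → Fin m) : ℝ :=
  ⨆ b : Fin m, ∑ i ∈ Finset.univ.filter fun i => D i = b, I.get i

noncomputable def prob {m : ℕ} (A : List ℝ → PMF (Fin m)) (I : List ℝ)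
    (D : Fin I.length → Fin m) : ℝ :=
  ∏ i : Fin I.length, ((A (I.take (i.1 + 1))) (D i)).toReal

noncomputable def expPayoff (m : ℕ) (A : List ℝ → PMF (Fin m)) (I : List ℝ) : ℝ :=
  ∑ D : Fin I.length → Fin m, prob A I D * payoff m I D

def detRun {m : ℕ} (A : List ℝ → Fin m) (I : List ℝ) : Fin I.length → Fin m :=
  fun i => A (I.take (i.1 + 1))

end BinStretch

namespace BinStretch

/-- Instances all of whose item sizes are integer multiples of `1/g`. -/
def InstanceG (m g : ℕ) (I : List ℝ) : Prop :=
  IsInstance m I ∧ ∀ a ∈ I, ∃ x : ℕ, a = (x : ℝ) / g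

end BinStretch


namespace BinStretch

lemma exists_dyadic_approx {ε a : ℝ} (hε : 0 < ε) (ha : 0 < a) :
    ∃ r : ℝ, (∃ k x : ℕ, r = (x : ℝ) / 2 ^ k) ∧ 0 < r ∧ r ≤ a ∧ a ≤ r + ε * a := by
  obtain ⟨k, hk⟩ := exists_pow_lt_of_lt_one (lt_min (mul_pos hε ha) ha)
    (by norm_num : (1 / 2 : ℝ) < 1)
  rw [lt_min_iff, one_div, inv_pow] at hk
  have hp : (0 : ℝ) < 2 ^ k := by positivity
  have hfl : (⌊a * 2 ^ k⌋₊ : ℝ) ≤ a * 2 ^ k := Nat.floor_le (by positivity)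
  have hlt : a * 2 ^ k < ⌊a * 2 ^ k⌋₊ + 1 := Nat.lt_floor_add_one _
  have h1 : 1 ≤ a * 2 ^ k := by
    have := mul_le_mul_of_nonneg_right hk.2.le hp.le
    rwa [inv_mul_cancel₀ hp.ne'] at this
  have hpos : 0 < ⌊a * 2 ^ k⌋₊ := Nat.floor_pos.2 h1
  refine ⟨(⌊a * 2 ^ k⌋₊ : ℝ) / 2 ^ k, ⟨k, _, rfl⟩, by positivity, (div_le_iff₀ hp).2 hfl, ?_⟩
  have h2 : a ≤ (⌊a * 2 ^ k⌋₊ + 1 : ℝ) / 2 ^ k := (le_div_iff₀ hp).2 hlt.le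
  rw [add_div, one_div] at h2
  linarith [hk.1]

lemma exists_common_denominator (L : List ℝ)
    (h : ∀ a ∈ L, ∃ k x : ℕ, a = (x : ℝ) / 2 ^ k) :
    ∃ k : ℕ, ∀ a ∈ L, ∃ x : ℕ, a = (x : ℝ) / ((2 ^ k : ℕ) : ℝ) := by
  induction L with
  | nil => exact ⟨0, by simp⟩
  | cons b L ih =>
    obtain ⟨k, hk⟩ := ih fun a ha => h a (List.mem_cons_of_mem _ ha)
    obtain ⟨l, y, hb⟩ := h b List.mem_cons_self
    refine ⟨k + l, fun a ha => ?_⟩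
    rcases List.mem_cons.1 ha with rfl | ha
    · refine ⟨y * 2 ^ k, ?_⟩
      rw [hb]
      push_cast
      field_simp
      ring
    · obtain ⟨x, hx⟩ := hk a ha
      refine ⟨x * 2 ^ l, ?_⟩
      rw [hx]
      push_cast
      field_simp
      ring

lemma sum_get_le {m : ℕ} {I : List ℝ} (h : Fits m I) : ∑ i, I.get i ≤ m := by
  obtain ⟨σ, hσ⟩ := h
  calc ∑ i, I.get i = ∑ b : Fin m, ∑ i ∈ Finset.univ.filter fun i => σ i = b, I.get i :=
        (Finset.sum_fiberwise _ _ _).symm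
    _ ≤ ∑ _b : Fin m, (1 : ℝ) := Finset.sum_le_sum fun b _ => hσ b
    _ = m := by simp

lemma prob_nonneg {m : ℕ} (A : List ℝ → PMF (Fin m)) (I : List ℝ) (D : Fin I.length → Fin m) :
    0 ≤ prob A I D :=
  Finset.prod_nonneg fun _ _ => ENNReal.toReal_nonneg

lemma sum_prob {m : ℕ} (A : List ℝ → PMF (Fin m)) (I : List ℝ) : ∑ D, prob A I D = 1 := by
  have hone (p : PMF (Fin m)) : ∑ b, (p b).toReal = 1 := by
    rw [← ENNReal.toReal_sum fun b _ => p.apply_ne_top b, ← tsum_fintype (L := .unconditional _),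
      p.tsum_coe, ENNReal.toReal_one]
  have := Finset.prod_univ_sum (fun _ : Fin I.length => (Finset.univ : Finset (Fin m)))
    (fun i b => (A (I.take (i.1 + 1)) b).toReal)
  simp only [hone, Finset.prod_const_one, Fintype.piFinset_univ] at this
  exact this.symm

lemma expPayoff_le {m : ℕ} (hm : 1 ≤ m) (A : List ℝ → PMF (Fin m)) {I : List ℝ}
    (h : IsInstance m I) : expPayoff m A I ≤ m := by
  have : Nonempty (Fin m) := ⟨⟨0, hm⟩⟩
  have hpay (D : Fin I.length → Fin m) : payoff m I D ≤ m := by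
    refine ciSup_le fun b => le_trans ?_ (sum_get_le h.2)
    exact Finset.sum_le_univ_sum_of_nonneg fun i => (h.1 _ (List.get_mem I i)).1.le
  calc expPayoff m A I ≤ ∑ D, prob A I D * m :=
        Finset.sum_le_sum fun D _ => mul_le_mul_of_nonneg_left (hpay D) (prob_nonneg A I D)
    _ = m := by rw [← Finset.sum_mul, sum_prob, one_mul]

/-- Identifies the positions of `I` with those of `I.map r`. -/
def idx (r : ℝ → ℝ) (I : List ℝ) : Fin (I.map r).length ≃ Fin I.length :=
  finCongr (List.length_map r)

lemma get_map_idx (r : ℝ → ℝ) (I : List ℝ) (i : Fin (I.map r).length) :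
    (I.map r).get i = r (I.get (idx r I i)) := by
  simp [idx]

/-- A bin load of the mapped list, as a sum over the positions of the original list. -/
lemma load_map {m : ℕ} (r : ℝ → ℝ) (I : List ℝ) (D : Fin I.length → Fin m) (b : Fin m) :
    ∑ i ∈ Finset.univ.filter fun i => (D ∘ idx r I) i = b, (I.map r).get i =
      ∑ i ∈ Finset.univ.filter fun i => D i = b, r (I.get i) :=
  Finset.sum_equiv (idx r I) (by simp) fun i _ => get_map_idx r I i

lemma prob_map {m : ℕ} (A : List ℝ → PMF (Fin m)) (r : ℝ → ℝ) (I : List ℝ)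
    (D : Fin I.length → Fin m) :
    prob A (I.map r) (D ∘ idx r I) = prob (fun L => A (L.map r)) I D := by
  refine Fintype.prod_equiv (idx r I) _ _ fun i => ?_
  simp [idx, List.map_take]

lemma fits_map {m : ℕ} {r : ℝ → ℝ} {I : List ℝ} (hr : ∀ a ∈ I, r a ≤ a) (h : Fits m I) :
    Fits m (I.map r) := by
  obtain ⟨σ, hσ⟩ := h
  refine ⟨σ ∘ idx r I, fun b => ?_⟩
  rw [load_map]
  exact (Finset.sum_le_sum fun i _ => hr _ (List.get_mem I i)).trans (hσ b)

/-- Since the total size of a list that fits is at most `m`, a relative rounding error of `ε`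
raises the payoff by at most `ε * m`. -/
lemma payoff_round_le {m : ℕ} (hm : 1 ≤ m) {ε : ℝ} (hε : 0 ≤ ε) {r : ℝ → ℝ} {I : List ℝ}
    (hI : IsInstance m I) (hr : ∀ a ∈ I, a ≤ r a + ε * a) (D : Fin I.length → Fin m) :
    payoff m I D ≤ payoff m (I.map r) (D ∘ idx r I) + ε * m := by
  have : Nonempty (Fin m) := ⟨⟨0, hm⟩⟩
  refine ciSup_le fun b => ?_
  have h1 := le_ciSup (f := fun b : Fin m =>
    ∑ i ∈ Finset.univ.filter fun i => (D ∘ idx r I) i = b, (I.map r).get i)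
    (Set.finite_range _).bddAbove b
  have h2 : ∑ i ∈ Finset.univ.filter fun i => D i = b, I.get i ≤ m :=
    (Finset.sum_le_univ_sum_of_nonneg fun i => (hI.1 _ (List.get_mem I i)).1.le).trans
      (sum_get_le hI.2)
  calc ∑ i ∈ Finset.univ.filter fun i => D i = b, I.get i
      ≤ ∑ i ∈ Finset.univ.filter fun i => D i = b, (r (I.get i) + ε * I.get i) :=
        Finset.sum_le_sum fun i _ => hr _ (List.get_mem I i)
    _ = (∑ i ∈ Finset.univ.filter fun i => D i = b, r (I.get i)) +
          ε * ∑ i ∈ Finset.univ.filter fun i => D i = b, I.get i := by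
        rw [Finset.sum_add_distrib, Finset.mul_sum]
    _ ≤ payoff m (I.map r) (D ∘ idx r I) + ε * m := by
        rw [← load_map]
        exact add_le_add h1 (mul_le_mul_of_nonneg_left h2 hε)

lemma expPayoff_round_le {m : ℕ} (hm : 1 ≤ m) (A : List ℝ → PMF (Fin m)) {ε : ℝ} (hε : 0 ≤ ε)
    {r : ℝ → ℝ} {I : List ℝ} (hI : IsInstance m I) (hr : ∀ a ∈ I, a ≤ r a + ε * a) :
    expPayoff m (fun L => A (L.map r)) I ≤ expPayoff m A (I.map r) + ε * m := by
  have hE : expPayoff m A (I.map r) = ∑ D : Fin I.length → Fin m,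
      prob (fun L => A (L.map r)) I D * payoff m (I.map r) (D ∘ idx r I) := by
    symm
    refine Fintype.sum_equiv ((idx r I).symm.arrowCongr (Equiv.refl _)) _ _ fun D => ?_
    rw [← prob_map]
    rfl
  calc expPayoff m (fun L => A (L.map r)) I
      ≤ ∑ D, prob (fun L => A (L.map r)) I D *
          (payoff m (I.map r) (D ∘ idx r I) + ε * m) :=
        Finset.sum_le_sum fun D _ =>
          mul_le_mul_of_nonneg_left (payoff_round_le hm hε hI hr D) (prob_nonneg _ I D)
    _ = expPayoff m A (I.map r) + ε * m := by
        simp only [mul_add, Finset.sum_add_distrib, ← Finset.sum_mul, sum_prob, one_mul, hE]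

end BinStretch

theorem extend_dyadic_algorithm (m : ℕ) (hm : 1 ≤ m) (δ : ℝ) (hδ : 0 < δ)
    (A : List ℝ → PMF (Fin m)) :
    ∃ A' : List ℝ → PMF (Fin m),
      (⨆ I : {I : List ℝ // BinStretch.IsInstance m I}, BinStretch.expPayoff m A' I.1) ≤
      (⨆ J : {J : List ℝ // ∃ k : ℕ, BinStretch.InstanceG m (2 ^ k) J},
        BinStretch.expPayoff m A J.1) + δ := by
  have hm0 : (0 : ℝ) < m := by exact_mod_cast hm
  have hε : 0 < δ / m := by positivity
  have hex : ∀ a : ℝ, ∃ r : ℝ, 0 < a →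
      (∃ k x : ℕ, r = (x : ℝ) / 2 ^ k) ∧ 0 < r ∧ r ≤ a ∧ a ≤ r + δ / m * a := fun a => by
    by_cases ha : 0 < a
    · exact (BinStretch.exists_dyadic_approx hε ha).imp fun _ h _ => h
    · exact ⟨0, fun h => absurd h ha⟩
  choose r hr using hex
  refine ⟨fun L => A (L.map r), ?_⟩
  have : Nonempty {I : List ℝ // BinStretch.IsInstance m I} :=
    ⟨⟨[], by simp, fun i => i.elim0, fun b => by simp⟩⟩
  refine ciSup_le fun ⟨I, hI⟩ => ?_
  have hrI : ∀ a ∈ I, _ := fun a ha => hr a (hI.1 a ha).1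
  have hJ : BinStretch.IsInstance m (I.map r) := by
    refine ⟨fun b hb => ?_, BinStretch.fits_map (fun a ha => (hrI a ha).2.2.1) hI.2⟩
    obtain ⟨a, ha, rfl⟩ := List.mem_map.1 hb
    exact ⟨(hrI a ha).2.1, (hrI a ha).2.2.1.trans (hI.1 a ha).2⟩
  obtain ⟨k, hk⟩ := BinStretch.exists_common_denominator (I.map r) fun b hb => by
    obtain ⟨a, ha, rfl⟩ := List.mem_map.1 hb
    exact (hrI a ha).1
  have hbdd : BddAbove (Set.range fun J : {J : List ℝ // ∃ k : ℕ,
      BinStretch.InstanceG m (2 ^ k) J} => BinStretch.expPayoff m A J.1) := by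
    refine ⟨m, ?_⟩
    rintro _ ⟨⟨J, l, hJl⟩, rfl⟩
    exact BinStretch.expPayoff_le hm A hJl.1
  have h1 := BinStretch.expPayoff_round_le hm A hε.le hI fun a ha => (hrI a ha).2.2.2
  have h2 := le_ciSup hbdd ⟨I.map r, k, hJ, hk⟩
  rw [div_mul_cancel₀ _ hm0.ne'] at h1
  exact h1.trans (by simpa using h2)
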